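/- arXiv:2205.00866 — 2 statements merged into one kernel-verified Lean document; each statement's English description precedes it below -/
import Mathlib

section
/- Let n ≥ 1 and let Q'_n(8,4) be the cylinder octagonal-quadrilateral network: the simple graph on the 8n vertices u_1,…,u_{4n}, v_1,…,v_{4n} whose edges are u_i u_{i+1} and v_i v_{i+1} for 1 ≤ i ≤ 4n−1, the closing edges u_{4n} u_1 and v_{4n} v_1, and u_i v_i for every i ≡ 0 or 1 (mod 4). Let 0 = μ_1 < μ_2 ≤ ⋯ ≤ μ_{8n} be the eigenvalues of the Laplacian matrix of Q'_n(8,4), and set μ = 15 + 4√14, ν = 15 − 4√14. Then the Kirchhoff index Kf(Q'_n(8,4)) = 8n · ∑_{k=2}^{8n} 1/μ_k satisfies Kf(Q'_n(8,4)) = (32n³ − 2n)/3 + (36n²√14/7) · (μ^n − ν^n)/(μ^n + ν^n − 2). -/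
/-!
The sum of the inverses of the nonzero Laplacian eigenvalues is the trace of the pseudo-inverse of
the Laplacian `L` (`trace_eq_sum_inv_eigenvalues`, `sum_inv_eq_of_charpoly`), and the pseudo-inverse
is written down explicitly.

The exchange `u_i ↔ v_i` is a symmetry of the network. On symmetric functions `L` acts as the
Laplacian of the cycle of length `4 n`; on antisymmetric ones it acts as that Laplacian plus the
potential equal to `2` at the rungs. So the pseudo-inverse `green` is assembled from

* the pseudo-inverse of the cycle Laplacian, a quadratic polynomial in the distance
  (`cycleCol_laplacian`, `sum_cycleCol`), with trace `(16 n² - 1) / 12`;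
* the inverse of the operator with potential (`rungCol_laplacian`). The potential has period `4`, and
  the homogeneous equation has the Floquet solutions `grow` and `decay` with multipliers `mu` and
  `nu`. The periodic Green function built from them has diagonal
  `grow i * decay i * (1 + nu ^ n) / (W * (1 - nu ^ n))` with Wronskian `W = 4 √14 / 5`, and
  the products `grow i * decay i` sum to `36 n / 5` (`sum_grow_mul_decay`).

Both kinds of column come from `glue_laplacian`, which glues two solutions on `ℤ` at the source.
Adding the two traces (`trace_green`) and using `mu * nu = 1` to rewrite
`(1 + nu ^ n) / (1 - nu ^ n)` as `(mu ^ n - nu ^ n) / (mu ^ n + nu ^ n - 2)` gives the formula.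
-/

noncomputable def mu : ℝ := 15 + 4 * Real.sqrt 14
noncomputable def nu : ℝ := 15 - 4 * Real.sqrt 14

/-- Underlying relation of the cylinder octagonal-quadrilateral network `Q'_n(8,4)`:
`Sum.inl i` is the vertex `u_{i+1}`, `Sum.inr i` is the vertex `v_{i+1}`. -/
def cylinderRel (n : ℕ) : (Fin (4 * n) ⊕ Fin (4 * n)) → (Fin (4 * n) ⊕ Fin (4 * n)) → Prop
  | Sum.inl i, Sum.inl j => i.val + 1 = j.val ∨ (i.val = 4 * n - 1 ∧ j.val = 0)
  | Sum.inr i, Sum.inr j => i.val + 1 = j.val ∨ (i.val = 4 * n - 1 ∧ j.val = 0)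
  | Sum.inl i, Sum.inr j => i = j ∧ ((i.val + 1) % 4 = 0 ∨ (i.val + 1) % 4 = 1)
  | Sum.inr _, Sum.inl _ => False

instance (n : ℕ) : DecidableRel (cylinderRel n) := fun a b => by
  rcases a with i | i <;> rcases b with j | j <;> simp only [cylinderRel] <;> infer_instance

/-- The cylinder octagonal-quadrilateral network `Q'_n(8,4)`. -/
def cylinder (n : ℕ) : SimpleGraph (Fin (4 * n) ⊕ Fin (4 * n)) :=
  SimpleGraph.fromRel (cylinderRel n)

instance (n : ℕ) : DecidableRel (cylinder n).Adj := fun a b =>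
  decidable_of_iff (a ≠ b ∧ (cylinderRel n a b ∨ cylinderRel n b a)) Iff.rfl

/-! ### Spectral theory: the sum of inverse eigenvalues as a trace -/

/-- If `P` and `G` satisfy the relations between a Hermitian `L`, its kernel projection and its
pseudo-inverse, then `trace G` is the sum of the inverses of the nonzero eigenvalues of `L` (a zero
eigenvalue contributes `0⁻¹ = 0`). In an eigenbasis of `L`, the relation `L G = 1 - P` gives the
diagonal entries of `G` off the kernel, and `P G = 0` makes those on the kernel vanish. -/
theorem trace_eq_sum_inv_eigenvalues {V : Type*} [Fintype V] [DecidableEq V]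
    {L G P : Matrix V V ℝ} (hL : L.IsHermitian)
    (hLG : L * G = 1 - P) (hLP : L * P = 0) (hPG : P * G = 0) :
    G.trace = ∑ i, (hL.eigenvalues i)⁻¹ := by
  set U : Matrix V V ℝ := (hL.eigenvectorUnitary : Matrix V V ℝ) with hU
  set D : Matrix V V ℝ := Matrix.diagonal hL.eigenvalues with hD
  have hUU : U * star U = 1 := Unitary.mul_star_self_of_mem hL.eigenvectorUnitary.2
  have hUU' : star U * U = 1 := Unitary.star_mul_self_of_mem hL.eigenvectorUnitary.2
  have hspec : L = U * D * star U := by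
    have := hL.spectral_theorem
    simpa [Unitary.conjStarAlgAut_apply, hU, hD] using this
  have hconj : star U * L = D * star U := by
    rw [hspec]
    simp only [← mul_assoc, hUU', one_mul]
  have h1 : D * (star U * G * U) = 1 - star U * P * U := by
    have : star U * (L * G) * U = D * (star U * G * U) := by
      rw [← mul_assoc, hconj]; simp only [mul_assoc]
    rw [← this, hLG, mul_sub, sub_mul, mul_one, hUU']
  have h2 : D * (star U * P * U) = 0 := by
    have : star U * (L * P) * U = D * (star U * P * U) := by
      rw [← mul_assoc, hconj]; simp only [mul_assoc]
    rw [← this, hLP]; simp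
  have h3 : (star U * P * U) * (star U * G * U) = 0 := by
    have : (star U * P * U) * (star U * G * U) = star U * (P * (U * star U) * G) * U := by
      simp only [mul_assoc]
    rw [this, hUU, mul_one, hPG]; simp
  have ht : G.trace = (star U * G * U).trace := by
    rw [Matrix.trace_mul_comm, ← mul_assoc, hUU, one_mul]
  rw [ht]
  generalize star U * G * U = G' at *
  generalize star U * P * U = P' at *
  refine Finset.sum_congr rfl fun i _ => ?_
  have e1 : ∀ j, hL.eigenvalues i * G' i j = (1 : Matrix V V ℝ) i j - P' i j := fun j => by
    have := congrFun (congrFun h1 i) j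
    simpa [hD, Matrix.diagonal_mul] using this
  have e2 : hL.eigenvalues i * P' i i = 0 := by
    have := congrFun (congrFun h2 i) i
    simpa only [hD, Matrix.diagonal_mul, Matrix.zero_apply] using this
  rw [Matrix.diag_apply]
  -- On the kernel, row `i` of `P'` is the `i`-th unit vector, so `P' * G' = 0` kills row `i` of `G'`.
  by_cases h0 : hL.eigenvalues i = 0
  · have e3 : ∀ j, P' i j = (1 : Matrix V V ℝ) i j := fun j => by
      have := e1 j
      rw [h0, zero_mul] at this
      linarith
    have e4 := congrFun (congrFun h3 i) i
    simp only [Matrix.mul_apply, e3, Matrix.one_apply, ite_mul, one_mul, zero_mul,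
      Finset.sum_ite_eq, Finset.mem_univ, if_true, Matrix.zero_apply] at e4
    rw [e4, h0, inv_zero]
  · have e3 : P' i i = 0 := by simpa [h0] using e2
    have := e1 i
    rw [e3, Matrix.one_apply_eq, sub_zero] at this
    exact eq_inv_of_mul_eq_one_right this

theorem sum_inv_eq_of_charpoly {V : Type*} [Fintype V] [DecidableEq V] {L : Matrix V V ℝ}
    (hL : L.IsHermitian) {N : ℕ} (μs : Fin N → ℝ)
    (hchar : L.charpoly = ∏ i, (Polynomial.X - Polynomial.C (μs i))) :
    ∑ i, (μs i)⁻¹ = ∑ i, (hL.eigenvalues i)⁻¹ := by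
  have h := hL.charpoly_eq.symm.trans hchar
  have h' : Finset.univ.val.map hL.eigenvalues = Finset.univ.val.map μs := by
    have := congrArg Polynomial.roots h
    rw [Polynomial.roots_prod _ _ (by simp [Finset.prod_ne_zero_iff, Polynomial.X_sub_C_ne_zero]),
      Polynomial.roots_prod _ _ (by simp [Finset.prod_ne_zero_iff, Polynomial.X_sub_C_ne_zero])]
      at this
    simpa only [RCLike.ofReal_real_eq_id, id, Polynomial.roots_X_sub_C,
      Multiset.bind_singleton] using this
  have := congrArg (fun s => (s.map (·⁻¹)).sum) h'
  simp only [Multiset.map_map] at this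
  exact this.symm

/-! ### The Laplacian of the network -/

theorem cylinder_adj_iff (n : ℕ) (x y : Fin (4 * n) ⊕ Fin (4 * n)) :
    (cylinder n).Adj x y ↔ x ≠ y ∧ (cylinderRel n x y ∨ cylinderRel n y x) := Iff.rfl

/-- The Laplacian at a vertex `s` with neighbours `p`, `q` and, exactly when `c` holds, a third
neighbour `r`. -/
theorem lap_of_neighbors (n : ℕ) {x : Fin (4 * n) ⊕ Fin (4 * n) → ℝ}
    {s p q r : Fin (4 * n) ⊕ Fin (4 * n)} {c : Prop} [Decidable c]
    (hpq : p ≠ q) (hpr : p ≠ r) (hqr : q ≠ r)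
    (hadj : ∀ y, (cylinder n).Adj s y ↔ y = p ∨ y = q ∨ (c ∧ y = r)) :
    (((cylinder n).lapMatrix ℝ).mulVec x) s
      = 2 * x s - x p - x q + if c then x s - x r else 0 := by
  have hnb : (cylinder n).neighborFinset s = if c then {p, q, r} else {p, q} := by
    ext y
    rw [SimpleGraph.mem_neighborFinset, hadj]
    split_ifs with h <;> simp [h]
  rw [SimpleGraph.lapMatrix_mulVec_apply, ← SimpleGraph.card_neighborFinset_eq_degree, hnb]
  split_ifs
  · rw [Finset.card_eq_three.2 ⟨p, q, r, hpq, hpr, hqr, rfl⟩,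
      Finset.sum_insert (by simp [hpq, hpr]), Finset.sum_pair hqr]
    push_cast; ring
  · rw [Finset.card_pair hpq, Finset.sum_pair hpq]
    push_cast; ring

/-- The Laplacian at `u_{i+1}`, where `p` and `q` are the predecessor and successor of `i` on the
cycle. They are distinct because the cycle has length `4 n ≥ 4`. -/
theorem lap_inl (n : ℕ) (x : Fin (4 * n) ⊕ Fin (4 * n) → ℝ) {i p q : Fin (4 * n)}
    (hq : q.val = if i.val + 1 = 4 * n then 0 else i.val + 1)
    (hp : p.val = if i.val = 0 then 4 * n - 1 else i.val - 1) :
    (((cylinder n).lapMatrix ℝ).mulVec x) (Sum.inl i)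
      = 2 * x (Sum.inl i) - x (Sum.inl p) - x (Sum.inl q)
        + if (i.val + 1) % 4 = 0 ∨ (i.val + 1) % 4 = 1 then x (Sum.inl i) - x (Sum.inr i) else 0 := by
  have hi := i.2
  refine lap_of_neighbors n (r := Sum.inr i) ?_ (by simp) (by simp) fun y => ?_
  · rw [Ne, Sum.inl.injEq, Fin.ext_iff, hp, hq]
    split_ifs <;> omega
  · rw [cylinder_adj_iff]
    rcases y with y | y
    · have hy := y.2
      simp only [cylinderRel, ne_eq, Sum.inl.injEq, reduceCtorEq, and_false, or_false, Fin.ext_iff,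
        hp, hq]
      split_ifs <;> omega
    · simp only [cylinderRel, ne_eq, Sum.inr.injEq, reduceCtorEq, Fin.ext_iff, false_or, or_false,
        not_false_eq_true, true_and]
      omega

theorem lap_inr (n : ℕ) (x : Fin (4 * n) ⊕ Fin (4 * n) → ℝ) {i p q : Fin (4 * n)}
    (hq : q.val = if i.val + 1 = 4 * n then 0 else i.val + 1)
    (hp : p.val = if i.val = 0 then 4 * n - 1 else i.val - 1) :
    (((cylinder n).lapMatrix ℝ).mulVec x) (Sum.inr i)
      = 2 * x (Sum.inr i) - x (Sum.inr p) - x (Sum.inr q)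
        + if (i.val + 1) % 4 = 0 ∨ (i.val + 1) % 4 = 1 then x (Sum.inr i) - x (Sum.inl i) else 0 := by
  have hi := i.2
  refine lap_of_neighbors n (r := Sum.inl i) ?_ (by simp) (by simp) fun y => ?_
  · rw [Ne, Sum.inr.injEq, Fin.ext_iff, hp, hq]
    split_ifs <;> omega
  · rw [cylinder_adj_iff]
    rcases y with y | y
    · simp only [cylinderRel, ne_eq, Sum.inl.injEq, reduceCtorEq, Fin.ext_iff, false_or,
        not_false_eq_true, true_and]
      constructor
      · rintro ⟨h, h'⟩
        exact ⟨h ▸ h', h⟩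
      · rintro ⟨h', h⟩
        exact ⟨h, h ▸ h'⟩
    · have hy := y.2
      simp only [cylinderRel, ne_eq, Sum.inr.injEq, reduceCtorEq, and_false, or_false, Fin.ext_iff,
        hp, hq]
      split_ifs <;> omega

/-! ### Green functions on a cycle by gluing -/

/-- The function on `ℕ` equal to `A` up to the source `j` and to `B` beyond it. With `A` and `B`
solutions of one difference equation on `ℤ`, this is a column of a Green function on a cycle. -/
def glue (A B : ℤ → ℝ) (j i : ℕ) : ℝ := if i ≤ j then A i else B i

/-- Suppose `A` and `B` solve the same equation `(-Δ + V) f = c` on `ℤ`, agree at the source `j`, have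
a jump `w` in their slopes there, and match around the cycle in the sense `B (k + m) = A k`. Then
the glued function solves `(-Δ + V) f = c + w · δ_j` on the cycle of length `m`; here `p` and `q`
are the predecessor and successor of `i` on the cycle. -/
theorem glue_laplacian {m : ℕ} (hm : 1 ≤ m) {A B V : ℤ → ℝ} {c w : ℝ} {i j p q : ℕ}
    (hA : ∀ k, (2 + V k) * A k - A (k - 1) - A (k + 1) = c)
    (hB : ∀ k, (2 + V k) * B k - B (k - 1) - B (k + 1) = c)
    (hper : ∀ k, B (k + m) = A k) (hj : A j = B j) (hw : A (j + 1) - B (j + 1) = w)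
    (hi : i < m) (hjm : j < m)
    (hq : q = if i + 1 = m then 0 else i + 1)
    (hp : p = if i = 0 then m - 1 else i - 1) :
    (2 + V i) * glue A B j i - glue A B j p - glue A B j q = c + if i = j then w else 0 := by
  have gA : ∀ k : ℕ, k ≤ j → glue A B j k = A k := fun k hk => if_pos hk
  have gB : ∀ k : ℕ, j ≤ k → glue A B j k = B k := fun k hk => by
    unfold glue
    split_ifs with h
    · rw [le_antisymm h hk, hj]
    · rfl
  have hprev : i ≤ j → glue A B j p = A (i - 1) := fun h => by
    split_ifs at hp with h0
    · rw [gB p (by omega), ← hper, h0, hp]; congr 1; push_cast [hm]; ring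
    · rw [gA p (by omega), hp]; congr 1; omega
  have hprev' : j < i → glue A B j p = B (i - 1) := fun h => by
    rw [if_neg (by omega)] at hp
    rw [gB p (by omega), hp]; congr 1; omega
  have hnext : j ≤ i → glue A B j q = B (i + 1) := fun h => by
    split_ifs at hq with h0
    · rw [gA q (by omega), ← hper, hq]; congr 1; omega
    · rw [gB q (by omega), hq]; congr 1
  have hnext' : i < j → glue A B j q = A (i + 1) := fun h => by
    rw [if_neg (by omega)] at hq
    rw [gA q (by omega), hq]; congr 1
  rcases lt_trichotomy i j with h | h | h
  · rw [gA i h.le, hprev h.le, hnext' h, if_neg h.ne, hA, add_zero]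
  · subst h
    rw [gA i le_rfl, hprev le_rfl, hnext le_rfl, if_pos rfl, ← hA i, ← hw]
    ring
  · rw [gB i h.le, hprev' h, hnext h.le, if_neg h.ne', hB, add_zero]

/-! ### The symmetric part: the plain cycle -/

/-- The pseudo-inverse of the Laplacian of the cycle of length `m`, as a function of the distance
`d` between the two vertices. The constant is the one for which its sum over the cycle is `0`. -/
noncomputable def cycleGreen (m : ℕ) (d : ℤ) : ℝ :=
  ((m : ℝ) ^ 2 - 1) / (12 * m) - d * (m - d) / (2 * m)

/-- The `j`-th column of the pseudo-inverse of the Laplacian of the cycle of length `m`. -/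
noncomputable def cycleCol (m j : ℕ) : ℕ → ℝ :=
  glue (fun i => cycleGreen m (j - i)) (fun i => cycleGreen m (i - j)) j

theorem cycleCol_laplacian {m : ℕ} (hm : 1 ≤ m) {i j p q : ℕ} (hi : i < m) (hjm : j < m)
    (hq : q = if i + 1 = m then 0 else i + 1)
    (hp : p = if i = 0 then m - 1 else i - 1) :
    2 * cycleCol m j i - cycleCol m j p - cycleCol m j q
      = -(1 / (m : ℝ)) + if i = j then 1 else 0 := by
  have hm0 : (m : ℝ) ≠ 0 := by positivity
  have := glue_laplacian (A := fun i => cycleGreen m (j - i)) (B := fun i => cycleGreen m (i - j))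
    (V := 0) (c := -(1 / (m : ℝ))) (w := 1) hm
    (fun k => by simp only [cycleGreen, Pi.zero_apply]; push_cast; field_simp; ring)
    (fun k => by simp only [cycleGreen, Pi.zero_apply]; push_cast; field_simp; ring)
    (fun k => by simp only [cycleGreen]; push_cast; field_simp; ring)
    (by simp only [cycleGreen])
    (by simp only [cycleGreen]; push_cast; field_simp; ring) hi hjm hq hp
  simpa [cycleCol] using this

theorem sum_cycleCol {m : ℕ} (hm : 1 ≤ m) {j : ℕ} (hjm : j < m) :
    ∑ i ∈ Finset.range m, cycleCol m j i = 0 := by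
  have hm0 : (m : ℝ) ≠ 0 := by positivity
  -- `K x` is the sum of `cycleGreen m d` over `0 ≤ d < x`.
  let K : ℝ → ℝ := fun x => x * ((m : ℝ) ^ 2 - 1) / (12 * m)
    - (m * (x * (x - 1) / 2) - x * (x - 1) * (2 * x - 1) / 6) / (2 * m)
  have key : ∀ k : ℕ, ∑ i ∈ Finset.range k, cycleCol m j i
      = if k ≤ j + 1 then K (j + 1) - K (j + 1 - k) else K (j + 1) + K (k - j) - K 1 := by
    intro k
    induction k with
    | zero => simp
    | succ k ih =>
      rw [Finset.sum_range_succ, ih]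
      simp only [cycleCol, glue, cycleGreen, K]
      rcases lt_trichotomy k (j + 1) with h | h | h
      · rw [if_pos h.le, if_pos (by omega), if_pos (by omega)]
        push_cast; field_simp; ring
      · subst h
        rw [if_pos le_rfl, if_neg (by omega), if_neg (by omega)]
        push_cast; field_simp; ring
      · rw [if_neg (by omega), if_neg (by omega), if_neg (by omega)]
        push_cast; field_simp; ring
  rw [key]
  simp only [K]
  split_ifs with h
  · have : m = j + 1 := by omega
    have h1 : (j : ℝ) = m - 1 := by rw [this]; push_cast; ring
    rw [h1]; field_simp; ring
  · field_simp; ring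

/-! ### Floquet solutions of the antisymmetric part -/

/-- A Floquet function of period `4` and multiplier `l`: affine with slope `s` on the block
`0, 1, 2, 3`, and multiplied by `l` under a shift by `4`. -/
noncomputable def floquet (s l : ℝ) (i : ℤ) : ℝ := (1 + ((i % 4 : ℤ) : ℝ) * s) * l ^ (i / 4)

/-- The potential which the rungs contribute on antisymmetric functions: `2` at the positions that
carry a rung (`i` is the 0-based index, as in `cylinderRel`), `0` elsewhere. -/
def rungPotential (i : ℤ) : ℝ := if (i + 1) % 4 = 0 ∨ (i + 1) % 4 = 1 then 2 else 0

/-- A Floquet function solves `(-Δ + V) f = 0` when its slope is a root of `5 s² - 12 s - 4` and its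
multiplier is `3 + 10 s`: inside a block the function is affine and there is no potential, the
equation at position `3` fixes the multiplier, and the one at position `0` gives the quadratic. -/
theorem floquet_recurrence {s l : ℝ} (hs : 5 * s ^ 2 - 12 * s - 4 = 0) (hl : l = 3 + 10 * s)
    (hl0 : l ≠ 0) (i : ℤ) :
    (2 + rungPotential i) * floquet s l i - floquet s l (i - 1) - floquet s l (i + 1) = 0 := by
  obtain ⟨q, r, hr0, hr4, rfl⟩ : ∃ q r : ℤ, 0 ≤ r ∧ r < 4 ∧ i = 4 * q + r :=
    ⟨i / 4, i % 4, by omega, by omega, by omega⟩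
  have key : ∀ t a : ℤ, 0 ≤ t → t < 4 → ∀ k, k = 4 * a + t →
      floquet s l k = (1 + (t : ℝ) * s) * l ^ a := by
    intro t a h0 h4 k hk
    rw [floquet, show k % 4 = t by omega, show k / 4 = a by omega]
  have hz : l ^ (q - 1) = l ^ q / l := by rw [zpow_sub_one₀ hl0]; rfl
  have hz' : l ^ (q + 1) = l ^ q * l := zpow_add_one₀ hl0 q
  interval_cases r
  · rw [key 0 q (by omega) (by omega) _ (by omega), key 3 (q - 1) (by omega) (by omega) _ (by omega),
      key 1 q (by omega) (by omega) _ (by omega), rungPotential, if_pos (by omega), hz]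
    push_cast
    field_simp
    rw [hl]
    linear_combination (-2) * (3 + 10 * s) ^ q * hs
  · rw [key 1 q (by omega) (by omega) _ (by omega), key 0 q (by omega) (by omega) _ (by omega),
      key 2 q (by omega) (by omega) _ (by omega), rungPotential, if_neg (by omega)]
    push_cast; ring
  · rw [key 2 q (by omega) (by omega) _ (by omega), key 1 q (by omega) (by omega) _ (by omega),
      key 3 q (by omega) (by omega) _ (by omega), rungPotential, if_neg (by omega)]
    push_cast; ring
  · rw [key 3 q (by omega) (by omega) _ (by omega), key 2 q (by omega) (by omega) _ (by omega),
      key 0 (q + 1) (by omega) (by omega) _ (by omega), rungPotential, if_pos (by omega), hz', hl]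
    push_cast; ring

theorem floquet_add_period {s l : ℝ} (hl0 : l ≠ 0) (n : ℕ) (i : ℤ) :
    floquet s l (i + (4 * n : ℕ)) = l ^ n * floquet s l i := by
  rw [floquet, floquet, show (i + (4 * n : ℕ)) % 4 = i % 4 by omega,
    show (i + (4 * n : ℕ)) / 4 = i / 4 + n by omega, zpow_add₀ hl0, zpow_natCast]
  ring

theorem mul_self_sqrt_fourteen : Real.sqrt 14 * Real.sqrt 14 = 14 :=
  Real.mul_self_sqrt (by norm_num)

theorem mu_mul_nu : mu * nu = 1 := by
  unfold mu nu
  linear_combination (-16) * mul_self_sqrt_fourteen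

theorem mu_pos : 0 < mu := by
  unfold mu; positivity

theorem nu_pos : 0 < nu := pos_of_mul_pos_right (mu_mul_nu ▸ one_pos) mu_pos.le

theorem nu_lt_one : nu < 1 := by
  have h : 1 < mu := by
    unfold mu
    linarith [Real.sqrt_nonneg 14]
  nlinarith [mu_mul_nu, nu_pos]

/-- The Floquet solution with multiplier `mu`, growing to the right; its slope
`(6 + 2 √14) / 5` is the larger root of `5 s² - 12 s - 4`. -/
noncomputable def grow : ℤ → ℝ := floquet ((6 + 2 * Real.sqrt 14) / 5) mu

/-- The Floquet solution with multiplier `nu`, decaying to the right; its slope is the smaller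
root of `5 s² - 12 s - 4`. -/
noncomputable def decay : ℤ → ℝ := floquet ((6 - 2 * Real.sqrt 14) / 5) nu

theorem grow_recurrence (i : ℤ) :
    (2 + rungPotential i) * grow i - grow (i - 1) - grow (i + 1) = 0 :=
  floquet_recurrence (by linear_combination (4 / 5) * mul_self_sqrt_fourteen)
    (by unfold mu; ring) mu_pos.ne' i

theorem decay_recurrence (i : ℤ) :
    (2 + rungPotential i) * decay i - decay (i - 1) - decay (i + 1) = 0 :=
  floquet_recurrence (by linear_combination (4 / 5) * mul_self_sqrt_fourteen)
    (by unfold nu; ring) nu_pos.ne' i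

/-- The Wronskian of the two Floquet solutions is constant; its value is the difference of the two
slopes. -/
theorem wronskian (j : ℕ) :
    grow (j + 1) * decay j - grow j * decay (j + 1) = 4 * Real.sqrt 14 / 5 := by
  induction j with
  | zero => simp [grow, decay, floquet]; ring
  | succ j ih =>
    have h1 := grow_recurrence (j + 1)
    have h2 := decay_recurrence (j + 1)
    rw [add_sub_cancel_right] at h1 h2
    push_cast
    linear_combination ih - decay (j + 1) * h1 + grow (j + 1) * h2

/-- The multipliers cancel since `mu * nu = 1`, so the product is `4`-periodic; on a block it is
`(1 + r s) (1 + r s')` with `s + s' = 12 / 5` and `s s' = -4 / 5`. -/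
theorem grow_mul_decay (i : ℤ) :
    grow i * decay i = 1 + 12 / 5 * ((i % 4 : ℤ) : ℝ) - 4 / 5 * ((i % 4 : ℤ) : ℝ) ^ 2 := by
  have h : mu ^ (i / 4) * nu ^ (i / 4) = 1 := by rw [← mul_zpow, mu_mul_nu, one_zpow]
  simp only [grow, decay, floquet]
  generalize ((i % 4 : ℤ) : ℝ) = r
  linear_combination (1 + r * ((6 + 2 * Real.sqrt 14) / 5)) * (1 + r * ((6 - 2 * Real.sqrt 14) / 5)) * h
    - 4 * r ^ 2 / 25 * mul_self_sqrt_fourteen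

theorem sum_grow_mul_decay (n : ℕ) :
    ∑ i ∈ Finset.range (4 * n), grow i * decay i = 36 / 5 * n := by
  induction n with
  | zero => simp
  | succ n ih =>
    rw [show 4 * (n + 1) = 4 * n + 1 + 1 + 1 + 1 by ring]
    simp only [Finset.sum_range_succ, ih]
    simp only [grow_mul_decay]
    rw [show (((4 * n : ℕ) : ℤ) % 4) = 0 by omega, show (((4 * n + 1 : ℕ) : ℤ) % 4) = 1 by omega,
      show (((4 * n + 1 + 1 : ℕ) : ℤ) % 4) = 2 by omega,
      show (((4 * n + 1 + 1 + 1 : ℕ) : ℤ) % 4) = 3 by omega]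
    push_cast; ring

/-! ### The Green function of the antisymmetric part -/

/-- The `j`-th column of the inverse of the cycle Laplacian plus `rungPotential`, on the cycle of
length `4 n`. It is the sum over all periodic images of the decaying Green function on `ℤ`, which
gives the two geometric series with ratio `nu ^ n`. -/
noncomputable def rungCol (n j : ℕ) : ℕ → ℝ :=
  glue (fun i => (grow i * decay j + nu ^ n * (decay i * grow j))
      / (4 * Real.sqrt 14 / 5 * (1 - nu ^ n)))
    (fun i => (grow j * decay i + nu ^ n * (decay j * grow i))
      / (4 * Real.sqrt 14 / 5 * (1 - nu ^ n))) j

theorem rungCol_self (n j : ℕ) : rungCol n j j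
    = grow j * decay j * ((1 + nu ^ n) / (4 * Real.sqrt 14 / 5 * (1 - nu ^ n))) := by
  rw [rungCol, glue, if_pos le_rfl]
  ring

theorem rungCol_laplacian {n : ℕ} (hn : 1 ≤ n) {i j p q : ℕ} (hi : i < 4 * n) (hjm : j < 4 * n)
    (hq : q = if i + 1 = 4 * n then 0 else i + 1)
    (hp : p = if i = 0 then 4 * n - 1 else i - 1) :
    (2 + rungPotential i) * rungCol n j i - rungCol n j p - rungCol n j q
      = if i = j then 1 else 0 := by
  have hb : 1 - nu ^ n ≠ 0 :=
    (sub_pos.2 (pow_lt_one₀ nu_pos.le nu_lt_one (by omega))).ne'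
  have hs : Real.sqrt 14 ≠ 0 := by positivity
  have hab : nu ^ n * mu ^ n = 1 := by rw [← mul_pow, mul_comm, mu_mul_nu, one_pow]
  have := glue_laplacian (m := 4 * n) (by omega) (V := rungPotential) (c := 0) (w := 1)
    (A := fun i => (grow i * decay j + nu ^ n * (decay i * grow j))
      / (4 * Real.sqrt 14 / 5 * (1 - nu ^ n)))
    (B := fun i => (grow j * decay i + nu ^ n * (decay j * grow i))
      / (4 * Real.sqrt 14 / 5 * (1 - nu ^ n)))
    (fun k => by
      linear_combination (decay j * grow_recurrence k + nu ^ n * grow j * decay_recurrence k)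
        / (4 * Real.sqrt 14 / 5 * (1 - nu ^ n)))
    (fun k => by
      linear_combination (grow j * decay_recurrence k + nu ^ n * decay j * grow_recurrence k)
        / (4 * Real.sqrt 14 / 5 * (1 - nu ^ n)))
    (fun k => by
      have h1 : grow (k + (4 * n : ℕ)) = mu ^ n * grow k := floquet_add_period mu_pos.ne' n k
      have h2 : decay (k + (4 * n : ℕ)) = nu ^ n * decay k := floquet_add_period nu_pos.ne' n k
      simp only [h1, h2]
      congr 1
      linear_combination decay j * grow k * hab)
    (by ring)
    (by
      rw [← sub_div, div_eq_one_iff_eq (by positivity)]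
      linear_combination (1 - nu ^ n) * wronskian j) hi hjm hq hp
  simpa [rungCol] using this

/-! ### The pseudo-inverse of the network Laplacian and its trace -/

/-- The pseudo-inverse of the Laplacian of the network, assembled from its symmetric part
`cycleCol` and its antisymmetric part `rungCol`. -/
noncomputable def green (n : ℕ) :
    Matrix (Fin (4 * n) ⊕ Fin (4 * n)) (Fin (4 * n) ⊕ Fin (4 * n)) ℝ :=
  Matrix.fromBlocks
    (Matrix.of fun i j => (cycleCol (4 * n) j i + rungCol n j i) / 2)
    (Matrix.of fun i j => (cycleCol (4 * n) j i - rungCol n j i) / 2)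
    (Matrix.of fun i j => (cycleCol (4 * n) j i - rungCol n j i) / 2)
    (Matrix.of fun i j => (cycleCol (4 * n) j i + rungCol n j i) / 2)

/-- The orthogonal projection onto the constant functions. -/
noncomputable def avg (n : ℕ) :
    Matrix (Fin (4 * n) ⊕ Fin (4 * n)) (Fin (4 * n) ⊕ Fin (4 * n)) ℝ :=
  Matrix.of fun _ _ => 1 / (8 * (n : ℝ))

theorem lap_mul_green {n : ℕ} (hn : 1 ≤ n) : (cylinder n).lapMatrix ℝ * green n = 1 - avg n := by
  ext a b
  have hmul : ((cylinder n).lapMatrix ℝ * green n) a b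
      = (((cylinder n).lapMatrix ℝ).mulVec fun c => green n c b) a := rfl
  rw [hmul, Matrix.sub_apply, avg, Matrix.of_apply,
    show 1 / (8 * (n : ℝ)) = (1 / (4 * (n : ℝ))) / 2 by ring]
  have hprev : ∀ i : Fin (4 * n), ∃ p : Fin (4 * n),
      p.val = if i.val = 0 then 4 * n - 1 else i.val - 1 := fun i =>
    ⟨⟨if i.val = 0 then 4 * n - 1 else i.val - 1, by have := i.2; split_ifs <;> omega⟩, rfl⟩
  have hnext : ∀ i : Fin (4 * n), ∃ q : Fin (4 * n),
      q.val = if i.val + 1 = 4 * n then 0 else i.val + 1 := fun i =>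
    ⟨⟨if i.val + 1 = 4 * n then 0 else i.val + 1, by have := i.2; split_ifs <;> omega⟩, rfl⟩
  have hV : ∀ i : ℕ, rungPotential i
      = if (i + 1) % 4 = 0 ∨ (i + 1) % 4 = 1 then 2 else 0 := fun i => by
    unfold rungPotential
    congr 1
    apply propext
    omega
  -- The two column equations; their half-sum and half-difference are the entries of `L * green`.
  have hcol : ∀ {i p q : Fin (4 * n)},
      (q.val = if i.val + 1 = 4 * n then 0 else i.val + 1) →
      (p.val = if i.val = 0 then 4 * n - 1 else i.val - 1) → ∀ j : Fin (4 * n),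
      (2 * cycleCol (4 * n) j i - cycleCol (4 * n) j p - cycleCol (4 * n) j q
        = -(1 / (4 * (n : ℝ))) + if i.val = j.val then 1 else 0) ∧
      ((2 + if (i.val + 1) % 4 = 0 ∨ (i.val + 1) % 4 = 1 then 2 else 0) * rungCol n j i
        - rungCol n j p - rungCol n j q = if i.val = j.val then 1 else 0) := by
    intro i p q hq hp j
    have h1 := cycleCol_laplacian (m := 4 * n) (by omega) i.2 j.2 hq hp
    have h2 := rungCol_laplacian hn i.2 j.2 hq hp
    rw [hV] at h2
    push_cast at h1
    exact ⟨h1, h2⟩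
  rcases a with i | i
  · obtain ⟨p, hp⟩ := hprev i
    obtain ⟨q, hq⟩ := hnext i
    rw [lap_inl n _ hq hp]
    rcases b with j | j
    · have ⟨h1, h2⟩ := hcol hq hp j
      simp only [green, Matrix.fromBlocks_apply₁₁, Matrix.fromBlocks_apply₂₁, Matrix.of_apply,
        Matrix.one_apply, Sum.inl.injEq, Fin.ext_iff]
      by_cases hc : (i.val + 1) % 4 = 0 ∨ (i.val + 1) % 4 = 1 <;>
        simp only [hc, if_true, if_false] at h1 h2 ⊢ <;> split_ifs at h1 h2 ⊢ <;> linarith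
    · have ⟨h1, h2⟩ := hcol hq hp j
      simp only [green, Matrix.fromBlocks_apply₁₂, Matrix.fromBlocks_apply₂₂, Matrix.of_apply,
        Matrix.one_apply, reduceCtorEq, if_false]
      by_cases hc : (i.val + 1) % 4 = 0 ∨ (i.val + 1) % 4 = 1 <;>
        simp only [hc, if_true, if_false] at h1 h2 ⊢ <;> split_ifs at h1 h2 ⊢ <;> linarith
  · obtain ⟨p, hp⟩ := hprev i
    obtain ⟨q, hq⟩ := hnext i
    rw [lap_inr n _ hq hp]
    rcases b with j | j
    · have ⟨h1, h2⟩ := hcol hq hp j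
      simp only [green, Matrix.fromBlocks_apply₁₁, Matrix.fromBlocks_apply₂₁, Matrix.of_apply,
        Matrix.one_apply, reduceCtorEq, if_false]
      by_cases hc : (i.val + 1) % 4 = 0 ∨ (i.val + 1) % 4 = 1 <;>
        simp only [hc, if_true, if_false] at h1 h2 ⊢ <;> split_ifs at h1 h2 ⊢ <;> linarith
    · have ⟨h1, h2⟩ := hcol hq hp j
      simp only [green, Matrix.fromBlocks_apply₁₂, Matrix.fromBlocks_apply₂₂, Matrix.of_apply,
        Matrix.one_apply, Sum.inr.injEq, Fin.ext_iff]
      by_cases hc : (i.val + 1) % 4 = 0 ∨ (i.val + 1) % 4 = 1 <;>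
        simp only [hc, if_true, if_false] at h1 h2 ⊢ <;> split_ifs at h1 h2 ⊢ <;> linarith

theorem lap_mul_avg (n : ℕ) : (cylinder n).lapMatrix ℝ * avg n = 0 := by
  ext a b
  have hmul : ((cylinder n).lapMatrix ℝ * avg n) a b
      = (((cylinder n).lapMatrix ℝ).mulVec fun _ => 1 / (8 * (n : ℝ))) a := rfl
  rw [hmul, SimpleGraph.lapMatrix_mulVec_apply]
  simp

theorem avg_mul_green {n : ℕ} (hn : 1 ≤ n) : avg n * green n = 0 := by
  ext a b
  have h : ∀ j : Fin (4 * n), ∑ i : Fin (4 * n), cycleCol (4 * n) j i = 0 := fun j => by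
    rw [Fin.sum_univ_eq_sum_range (cycleCol (4 * n) j)]
    exact sum_cycleCol (by omega) j.2
  rw [Matrix.mul_apply]
  simp only [avg, Matrix.of_apply, ← Finset.mul_sum, Matrix.zero_apply, Fintype.sum_sum_type,
    ← Finset.sum_add_distrib]
  rcases b with j | j
  · simp only [green, Matrix.fromBlocks_apply₁₁, Matrix.fromBlocks_apply₂₁, Matrix.of_apply]
    rw [← mul_zero (1 / (8 * (n : ℝ))), ← h j]
    congr 1
    exact Finset.sum_congr rfl fun i _ => by ring
  · simp only [green, Matrix.fromBlocks_apply₁₂, Matrix.fromBlocks_apply₂₂, Matrix.of_apply]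
    rw [← mul_zero (1 / (8 * (n : ℝ))), ← h j]
    congr 1
    exact Finset.sum_congr rfl fun i _ => by ring

theorem trace_green {n : ℕ} (hn : 1 ≤ n) : (green n).trace
    = (16 * (n : ℝ) ^ 2 - 1) / 12
      + 36 / 5 * n * ((1 + nu ^ n) / (4 * Real.sqrt 14 / 5 * (1 - nu ^ n))) := by
  have hn0 : (n : ℝ) ≠ 0 := by positivity
  have h1 : (green n).trace = ∑ i ∈ Finset.range (4 * n), (cycleCol (4 * n) i i + rungCol n i i) := by
    rw [← Fin.sum_univ_eq_sum_range (fun i => cycleCol (4 * n) i i + rungCol n i i)]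
    simp only [Matrix.trace, Fintype.sum_sum_type, Matrix.diag_apply, green,
      Matrix.fromBlocks_apply₁₁, Matrix.fromBlocks_apply₂₂, Matrix.of_apply,
      ← Finset.sum_add_distrib]
    exact Finset.sum_congr rfl fun i _ => by ring
  have h2 : ∀ i : ℕ, cycleCol (4 * n) i i = (16 * (n : ℝ) ^ 2 - 1) / (48 * n) := fun i => by
    rw [cycleCol, glue, if_pos le_rfl, cycleGreen]
    push_cast
    field_simp
    ring
  rw [h1, Finset.sum_add_distrib]
  simp only [h2, rungCol_self, ← Finset.sum_mul, sum_grow_mul_decay, Finset.sum_const,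
    Finset.card_range, nsmul_eq_mul]
  push_cast
  field_simp
  ring

theorem stmt_13 (n : ℕ) (hn : 1 ≤ n) (μs : Fin (8 * n) → ℝ)
    (hmono : Monotone μs)
    (hzero : μs ⟨0, by omega⟩ = 0)
    (hpos : ∀ i : Fin (8 * n), i ≠ ⟨0, by omega⟩ → 0 < μs i)
    (hchar : ((cylinder n).lapMatrix ℝ).charpoly
      = ∏ i : Fin (8 * n), (Polynomial.X - Polynomial.C (μs i))) :
    (8 * n : ℝ) * ∑ i ∈ Finset.univ.erase (⟨0, by omega⟩ : Fin (8 * n)), (μs i)⁻¹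
      = (32 * (n : ℝ) ^ 3 - 2 * n) / 3
        + (36 * (n : ℝ) ^ 2 * Real.sqrt 14 / 7) * (mu ^ n - nu ^ n) / (mu ^ n + nu ^ n - 2) := by
  have hL : ((cylinder n).lapMatrix ℝ).IsHermitian := (cylinder n).isHermitian_lapMatrix ℝ
  -- The erased term is `0⁻¹ = 0`, so it may be put back.
  have hsum : ∑ i ∈ Finset.univ.erase (⟨0, by omega⟩ : Fin (8 * n)), (μs i)⁻¹
      = (green n).trace := by
    rw [Finset.sum_erase _ (by rw [hzero, inv_zero]), sum_inv_eq_of_charpoly hL μs hchar,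
      trace_eq_sum_inv_eigenvalues hL (lap_mul_green hn) (lap_mul_avg n) (avg_mul_green hn)]
  rw [hsum, trace_green hn]
  have hab : mu ^ n * nu ^ n = 1 := by rw [← mul_pow, mu_mul_nu, one_pow]
  have hb0 : 0 < nu ^ n := pow_pos nu_pos n
  have hb1 : 0 < 1 - nu ^ n := sub_pos.2 (pow_lt_one₀ nu_pos.le nu_lt_one (by omega))
  have hd : mu ^ n + nu ^ n - 2 ≠ 0 := by
    intro h
    have : (1 - nu ^ n) ^ 2 = 0 := by linear_combination nu ^ n * h - hab
    exact hb1.ne' (pow_eq_zero_iff two_ne_zero |>.1 this)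
  -- Since `mu * nu = 1`, the two closed forms of the hyperbolic cotangent agree.
  have hcoth : (1 + nu ^ n) / (1 - nu ^ n) = (mu ^ n - nu ^ n) / (mu ^ n + nu ^ n - 2) := by
    rw [div_eq_div_iff hb1.ne' hd]
    linear_combination 2 * hab
  have hs : (Real.sqrt 14)⁻¹ = Real.sqrt 14 / 14 := by
    rw [inv_eq_iff_eq_inv, inv_div, eq_div_iff (by positivity), mul_self_sqrt_fourteen]
  have e1 : (1 + nu ^ n) / (4 * Real.sqrt 14 / 5 * (1 - nu ^ n))
      = 5 / 4 * (Real.sqrt 14)⁻¹ * ((1 + nu ^ n) / (1 - nu ^ n)) := by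
    field_simp
  rw [e1, hs, hcoth]
  ring
end

section
/- Let n ≥ 1 and let Q_n(8,4) be the Möbius octagonal-quadrilateral network: the simple graph on the 8n vertices u_1,…,u_{4n}, v_1,…,v_{4n} whose edges are u_i u_{i+1} and v_i v_{i+1} for 1 ≤ i ≤ 4n−1, u_i v_i for every i ≡ 0 or 1 (mod 4), and the two twisted edges u_1 v_{4n} and v_1 u_{4n}. Let 0 = μ_1 < μ_2 ≤ ⋯ ≤ μ_{8n} be the eigenvalues of its Laplacian matrix, and set μ = 15 + 4√14, ν = 15 − 4√14. Then the complexity (number of spanning trees) of Q_n(8,4), given by (1/(8n)) ∏_{i=2}^{8n} μ_i, equals 2n(μ^n + ν^n + 2). -/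
/-- Underlying relation of the Möbius octagonal-quadrilateral network `Q_n(8,4)`:
`Sum.inl i` is the vertex `u_{i+1}`, `Sum.inr i` is the vertex `v_{i+1}`. -/
def mobiusRel (n : ℕ) : (Fin (4 * n) ⊕ Fin (4 * n)) → (Fin (4 * n) ⊕ Fin (4 * n)) → Prop
  | Sum.inl i, Sum.inl j => i.val + 1 = j.val
  | Sum.inr i, Sum.inr j => i.val + 1 = j.val
  | Sum.inl i, Sum.inr j =>
      (i = j ∧ ((i.val + 1) % 4 = 0 ∨ (i.val + 1) % 4 = 1)) ∨
      (i.val = 0 ∧ j.val = 4 * n - 1) ∨ (i.val = 4 * n - 1 ∧ j.val = 0)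
  | Sum.inr _, Sum.inl _ => False

instance (n : ℕ) : DecidableRel (mobiusRel n) := fun a b => by
  rcases a with i | i <;> rcases b with j | j <;> simp only [mobiusRel] <;> infer_instance

/-- The Möbius octagonal-quadrilateral network `Q_n(8,4)`. -/
def mobius (n : ℕ) : SimpleGraph (Fin (4 * n) ⊕ Fin (4 * n)) :=
  SimpleGraph.fromRel (mobiusRel n)

instance (n : ℕ) : DecidableRel (mobius n).Adj := fun a b =>
  decidable_of_iff (a ≠ b ∧ (mobiusRel n a b ∨ mobiusRel n b a)) Iff.rfl

/-! ### Block-symmetric matrices -/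

open Matrix Polynomial in
/-- Adding the second block row to the first and subtracting the first block column from the second
makes the matrix block triangular. -/
theorem charpoly_swap {m R : Type*} [Fintype m] [DecidableEq m] [CommRing R]
    (A B : Matrix m m R) :
    (fromBlocks A B B A).charpoly = (A + B).charpoly * (A - B).charpoly := by
  have key : fromBlocks (1 : Matrix m m R[X]) 1 0 1 * (fromBlocks A B B A).charmatrix *
      fromBlocks 1 (-1) 0 1
      = fromBlocks (A + B).charmatrix 0 (-B.map C) (A - B).charmatrix := by
    rw [charmatrix_fromBlocks, fromBlocks_multiply, fromBlocks_multiply]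
    congr 1
    · ext i j : 1
      simp [charmatrix_apply]; ring
    · ext i j : 1
      simp [charmatrix_apply]; ring
    · simp
    · ext i j : 1
      simp [charmatrix_apply]; ring
  have := congrArg Matrix.det key
  rwa [det_mul, det_mul, det_fromBlocks_zero₂₁, det_fromBlocks_zero₂₁, det_fromBlocks_zero₁₂,
    det_one, one_mul, one_mul, mul_one] at this

/-! ### Determinants of periodic Jacobi matrices -/

section Jacobi

variable {R : Type*} [CommRing R]

/-- The solution `y` of the three-term recurrence `y (k + 2) = d k * y (k + 1) - y k` with
`y 0 = p` and `y 1 = q`. -/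
def jacobiSol (d : ℕ → R) (p q : R) : ℕ → R
  | 0 => p
  | 1 => q
  | k + 2 => d k * jacobiSol d p q (k + 1) - jacobiSol d p q k

/-- The trace of the transfer matrix of the recurrence over `N` steps, that is, of the linear map
`(y 0, y 1) ↦ (y N, y (N + 1))`. -/
def transferTrace (d : ℕ → R) (N : ℕ) : R :=
  jacobiSol d 1 0 N + jacobiSol d 0 1 (N + 1)

/-- The `N × N` periodic Jacobi matrix with diagonal `d`, off-diagonal entries `-1` and corner
entries `-ε`. It encodes a Jacobi matrix only for `3 ≤ N`, since for smaller `N` the corners lie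
on the diagonal or next to it. -/
def periodicJacobi (N : ℕ) (d : ℕ → R) (ε : R) : Matrix (Fin N) (Fin N) R := fun i j =>
  if i.val = j.val then d i.val
  else if i.val + 1 = j.val ∨ j.val + 1 = i.val then -1
  else if i.val = 0 ∧ j.val = N - 1 ∨ i.val = N - 1 ∧ j.val = 0 then -ε
  else 0

/-- The lower unitriangular matrix of the recurrence started from `y 0 = y 1 = 0`. -/
def recMatrix (N : ℕ) (d : ℕ → R) : Matrix (Fin N) (Fin N) R := fun i j =>
  (if j.val = i.val then 1 else 0) + (if j.val + 1 = i.val then -d j.val else 0)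
    + (if j.val + 2 = i.val then 1 else 0)

theorem det_recMatrix (N : ℕ) (d : ℕ → R) : (recMatrix N d).det = 1 := by
  rw [Matrix.det_of_isLowerTriangular]
  · simp [recMatrix]
  · intro i j hij
    have : i.val < j.val := by simpa using hij
    simp only [recMatrix]
    rw [if_neg (by omega), if_neg (by omega), if_neg (by omega)]
    simp

/-- The Wronskian of the two fundamental solutions is constant. -/
theorem wronskian_s14 (d : ℕ → R) (k : ℕ) :
    jacobiSol d 0 1 (k + 1) * jacobiSol d (-1) 0 (k + 2)
      - jacobiSol d 0 1 (k + 2) * jacobiSol d (-1) 0 (k + 1) = 1 := by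
  induction k with
  | zero => simp [jacobiSol]
  | succ k ih =>
    have ha : jacobiSol d 0 1 (k + 1 + 2)
      = d (k + 1) * jacobiSol d 0 1 (k + 2) - jacobiSol d 0 1 (k + 1) := rfl
    have hb : jacobiSol d (-1) 0 (k + 1 + 2)
      = d (k + 1) * jacobiSol d (-1) 0 (k + 2) - jacobiSol d (-1) 0 (k + 1) := rfl
    simp only [show k + 1 + 1 = k + 2 from rfl]
    rw [ha, hb]
    linear_combination ih

theorem jacobiSol_neg (d : ℕ → R) (k : ℕ) :
    jacobiSol d (-1) 0 k = -jacobiSol d 1 0 k ∧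
    jacobiSol d (-1) 0 (k + 1) = -jacobiSol d 1 0 (k + 1) := by
  induction k with
  | zero => simp [jacobiSol]
  | succ k ih =>
    refine ⟨ih.2, ?_⟩
    rw [jacobiSol, jacobiSol, ih.1, ih.2]; ring

/-- The matrix whose columns are the first two standard basis vectors. -/
def unitCols (R : Type*) [CommRing R] (N : ℕ) : Matrix (Fin N) (Fin 2) R := fun i c =>
  if i.val = c.val then 1 else 0

/-- The matrix whose columns are two independent solutions of the recurrence, read from index `1`
on. -/
def solCols (N : ℕ) (d : ℕ → R) : Matrix (Fin N) (Fin 2) R := fun i c =>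
  if c = 0 then jacobiSol d 0 1 (i.val + 1) else jacobiSol d (-1) 0 (i.val + 1)

theorem recMatrix_mul_solCols (N : ℕ) (d : ℕ → R) :
    recMatrix N d * solCols N d = unitCols R N := by
  ext i c
  have key : ∀ y : ℕ → R, ∑ j : Fin N, recMatrix N d i j * y j.val
      = y i.val + (if 1 ≤ i.val then -d (i.val - 1) * y (i.val - 1) else 0)
        + (if 2 ≤ i.val then y (i.val - 2) else 0) := by
    intro y
    obtain ⟨i, hi⟩ := i
    simp only [recMatrix, add_mul, Finset.sum_add_distrib, ite_mul, zero_mul, one_mul]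
    rw [Fin.sum_univ_eq_sum_range (fun j => if j = i then y j else 0),
      Fin.sum_univ_eq_sum_range (fun j => if j + 1 = i then -d j * y j else 0),
      Fin.sum_univ_eq_sum_range (fun j => if j + 2 = i then y j else 0)]
    rcases i with _ | _ | k
    · simp [hi]
    · simp [hi, Nat.zero_lt_of_lt hi]
    · have hk : k < N := by omega
      have hk' : k + 1 < N := by omega
      simp [hi, hk, hk']
  rw [Matrix.mul_apply]
  obtain ⟨i, hi⟩ := i
  fin_cases c
  · refine (key (fun k => jacobiSol d 0 1 (k + 1))).trans ?_
    rcases i with _ | _ | k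
    · simp [jacobiSol, unitCols]
    · simp [jacobiSol, unitCols]
    · simp [jacobiSol, unitCols]; ring
  · refine (key (fun k => jacobiSol d (-1) 0 (k + 1))).trans ?_
    rcases i with _ | _ | k
    · simp [jacobiSol, unitCols]
    · simp [jacobiSol, unitCols]
    · simp [jacobiSol, unitCols]; ring

/-- Rotating the rows of `-J` by one step gives a rank-two perturbation of the unitriangular matrix
`T` of the recurrence. The columns of `T⁻¹ U` are two solutions of the recurrence, so the
determinant reduces to a `2 × 2` one, which the constancy of the Wronskian evaluates. -/
theorem det_periodicJacobi (N : ℕ) (hN : 3 ≤ N) (d : ℕ → R) (ε : R) (hε : ε * ε = 1) :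
    (periodicJacobi N d ε).det = transferTrace d N - 2 * ε := by
  obtain ⟨m, rfl⟩ : ∃ m, N = m + 3 := ⟨N - 3, by omega⟩
  set T := recMatrix (m + 3) d
  set U := unitCols R (m + 3)
  let V : Matrix (Fin 2) (Fin (m + 3)) R := fun c j =>
    if c = 0 then
      (if j.val = 0 then ε - 1 else 0) + (if j.val = m + 2 then -d (m + 2) else 0)
        + (if j.val = m + 1 then 1 else 0)
    else if j.val = m + 2 then ε else 0
  set W := solCols (m + 3) d
  have hTW : T * W = U := recMatrix_mul_solCols (m + 3) d
  have hUV : ∀ i j : Fin (m + 3), (U * V) i j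
      = (if i.val = 0 then (if j.val = 0 then ε - 1 else 0)
          + (if j.val = m + 2 then -d (m + 2) else 0) + (if j.val = m + 1 then 1 else 0) else 0)
        + (if i.val = 1 then if j.val = m + 2 then ε else 0 else 0) := by
    intro i j
    rw [Matrix.mul_apply, Fin.sum_univ_two]
    simp [U, V, unitCols, ← ite_and, and_comm]
  have hrot : (T + U * V).submatrix (finRotate (m + 3)) id = -periodicJacobi (m + 3) d ε := by
    ext i j
    obtain ⟨j, hj⟩ := j
    obtain ⟨i, hi⟩ := i
    simp only [Matrix.submatrix_apply, Matrix.add_apply, hUV, Matrix.neg_apply, T, recMatrix,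
      periodicJacobi, coe_finRotate, id, Fin.ext_iff, Fin.val_last]
    clear hUV hTW
    by_cases h : i = m + 2
    · subst h
      simp only [if_true]
      grind
    · simp only [h, if_false]
      grind
  have hdet : (T + U * V).det = ε * 2 - transferTrace d (m + 3) := by
    have hfac : T + U * V = T * (1 + W * V) := by
      rw [Matrix.mul_add, Matrix.mul_one, ← Matrix.mul_assoc, hTW]
    have hV0 : ∀ y : ℕ → R, ∑ j : Fin (m + 3), V 0 j * y j.val
        = (ε - 1) * y 0 - d (m + 2) * y (m + 2) + y (m + 1) := by
      intro y
      simp only [V, if_true, add_mul, Finset.sum_add_distrib, ite_mul, zero_mul, one_mul]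
      rw [Fin.sum_univ_eq_sum_range (fun j => if j = 0 then (ε - 1) * y j else 0),
        Fin.sum_univ_eq_sum_range (fun j => if j = m + 2 then -d (m + 2) * y j else 0),
        Fin.sum_univ_eq_sum_range (fun j => if j = m + 1 then y j else 0)]
      rw [Finset.sum_ite_eq', Finset.sum_ite_eq', Finset.sum_ite_eq']
      simp
      ring
    have hV1 : ∀ y : ℕ → R, ∑ j : Fin (m + 3), V 1 j * y j.val = ε * y (m + 2) := by
      intro y
      simp only [V, one_ne_zero, if_false, ite_mul, zero_mul]
      rw [Fin.sum_univ_eq_sum_range (fun j => if j = m + 2 then ε * y j else 0),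
        Finset.sum_ite_eq']
      simp
    rw [hfac, Matrix.det_mul, det_recMatrix, one_mul, Matrix.det_one_add_mul_comm,
      Matrix.det_fin_two]
    have e00 : (V * W) 0 0 = _ := hV0 (fun k => jacobiSol d 0 1 (k + 1))
    have e01 : (V * W) 0 1 = _ := hV0 (fun k => jacobiSol d (-1) 0 (k + 1))
    have e10 : (V * W) 1 0 = _ := hV1 (fun k => jacobiSol d 0 1 (k + 1))
    have e11 : (V * W) 1 1 = _ := hV1 (fun k => jacobiSol d (-1) 0 (k + 1))
    simp only [Matrix.add_apply, e00, e01, e10, e11, transferTrace]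
    have hw := wronskian_s14 d (m + 2)
    have ha : jacobiSol d 0 1 (m + 4)
      = d (m + 2) * jacobiSol d 0 1 (m + 3) - jacobiSol d 0 1 (m + 2) := rfl
    have hb : jacobiSol d (-1) 0 (m + 4)
      = d (m + 2) * jacobiSol d (-1) 0 (m + 3) - jacobiSol d (-1) 0 (m + 2) := rfl
    have hneg : jacobiSol d 1 0 (m + 3) = -jacobiSol d (-1) 0 (m + 3) := by
      rw [(jacobiSol_neg d (m + 3)).1, neg_neg]
    have s1 : jacobiSol d 0 1 (0 + 1) = 1 := rfl
    have s2 : jacobiSol d (-1) 0 (0 + 1) = 0 := rfl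
    rw [hneg, s1, s2]
    simp only [Matrix.one_apply_eq, Matrix.one_apply_ne (zero_ne_one : (0 : Fin 2) ≠ 1),
      Matrix.one_apply_ne (one_ne_zero : (1 : Fin 2) ≠ 0)]
    simp only [show m + 2 + 1 = m + 3 from rfl, show m + 1 + 1 = m + 2 from rfl,
      show m + 2 + 2 = m + 4 from rfl] at hw ⊢
    rw [hb, ha] at hw
    rw [ha]
    linear_combination ε * hw + jacobiSol d (-1) 0 (m + 3) * hε
  have h := congrArg Matrix.det hrot
  rw [Matrix.det_permute, hdet, sign_finRotate, Matrix.det_neg, Fintype.card_fin] at h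
  have hs : ((-1 : R) ^ (m + 2)) * (-1) ^ (m + 2) = 1 := by
    rw [← mul_pow]; simp
  push_cast at h
  rw [pow_succ (-1 : R) (m + 2)] at h
  linear_combination ((-1 : R) ^ (m + 2)) * h - (ε * 2 - transferTrace d (m + 3)
    + (periodicJacobi (m + 3) d ε).det) * hs

theorem transferTrace_const (d : R) (k : ℕ) :
    transferTrace (fun _ => d) (k + 2)
      = d * transferTrace (fun _ => d) (k + 1) - transferTrace (fun _ => d) k := by
  simp only [transferTrace, jacobiSol]; ring

end Jacobi

/-! ### The two transfer traces -/

open Polynomial in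
/-- The product of the nonzero Laplacian eigenvalues of the cycle `C_k` is `k ^ 2`; up to sign it is
the linear coefficient of the transfer trace. -/
theorem coeff_transferTrace_two_sub_X (k : ℕ) :
    (transferTrace (fun _ => (2 - X : ℝ[X])) k).coeff 0 = 2 ∧
    (transferTrace (fun _ => (2 - X : ℝ[X])) k).coeff 1 = -(k : ℝ) ^ 2 := by
  induction k using Nat.strong_induction_on with
  | _ k ih =>
    rcases k with _ | _ | k
    · simp [transferTrace, jacobiSol, coeff_one]
      norm_num
    · simp [transferTrace, jacobiSol, coeff_X]
    · obtain ⟨a0, a1⟩ := ih k (by omega)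
      obtain ⟨b0, b1⟩ := ih (k + 1) (by omega)
      rw [transferTrace_const, sub_mul]
      constructor
      · rw [coeff_sub, coeff_sub, coeff_X_mul_zero, coeff_ofNat_mul, a0, b0]; norm_num
      · rw [coeff_sub, coeff_sub, coeff_X_mul, coeff_ofNat_mul, a1, b0, b1]
        push_cast; ring

/-- The number of untwisted rungs, `0` or `1`, at each of the vertices `u_{i+1}` and `v_{i+1}`. -/
def rung (i : ℕ) : ℝ := if (i + 1) % 4 = 0 ∨ (i + 1) % 4 = 1 then 1 else 0

/-- One period of the recurrence, with coefficients `4, 2, 2, 4`, acts on `(y 0, y 1)` by the matrix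
`[[-3, 10], [-10, 33]]`. -/
theorem jacobiSol_rung_step (p q : ℝ) (n : ℕ) :
    let y := jacobiSol (fun i => 2 + 2 * rung i) p q
    y (4 * n + 4) = 10 * y (4 * n + 1) - 3 * y (4 * n) ∧
    y (4 * n + 5) = 33 * y (4 * n + 1) - 10 * y (4 * n) := by
  have h0 : rung (4 * n) = 1 := if_pos (by omega)
  have h1 : rung (4 * n + 1) = 0 := if_neg (by omega)
  have h2 : rung (4 * n + 2) = 0 := if_neg (by omega)
  have h3 : rung (4 * n + 3) = 1 := if_pos (by omega)
  simp only [jacobiSol, h0, h1, h2, h3]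
  constructor <;> ring

/-- The Cayley-Hamilton relation for the transfer matrix of one period. -/
theorem transferTrace_rung_step (n : ℕ) :
    let t := fun n => transferTrace (fun i => 2 + 2 * rung i) (4 * n)
    t (n + 2) = 30 * t (n + 1) - t n := by
  have a := jacobiSol_rung_step 1 0 n
  have b := jacobiSol_rung_step 1 0 (n + 1)
  have c := jacobiSol_rung_step 0 1 n
  have e := jacobiSol_rung_step 0 1 (n + 1)
  simp only [transferTrace, show 4 * (n + 2) = 4 * n + 8 by ring,
    show 4 * (n + 1) = 4 * n + 4 by ring, show 4 * n + 4 + 4 = 4 * n + 8 by ring,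
    show 4 * n + 4 + 5 = 4 * n + 9 by ring, show 4 * n + 4 + 1 = 4 * n + 5 by ring] at a b c e ⊢
  linear_combination b.1 + e.2 + 10 * a.2 - 33 * a.1 + 3 * c.2 - 10 * c.1

theorem mu_sq : mu ^ 2 = 30 * mu - 1 := by
  have := Real.sq_sqrt (show (0 : ℝ) ≤ 14 by norm_num)
  unfold mu; linear_combination 16 * this

theorem nu_sq : nu ^ 2 = 30 * nu - 1 := by
  have := Real.sq_sqrt (show (0 : ℝ) ≤ 14 by norm_num)
  unfold nu; linear_combination 16 * this

theorem transferTrace_rung (n : ℕ) :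
    transferTrace (fun i => 2 + 2 * rung i) (4 * n) = mu ^ n + nu ^ n := by
  induction n using Nat.strong_induction_on with
  | _ n ih =>
    rcases n with _ | _ | n
    · simp [transferTrace, jacobiSol]
    · have a := (jacobiSol_rung_step 1 0 0).1
      have b := (jacobiSol_rung_step 0 1 0).2
      simp only [mul_zero, zero_add] at a b
      simp only [transferTrace, zero_add, mul_one]
      rw [a, b]
      simp [jacobiSol, mu, nu]; ring
    · have h := transferTrace_rung_step n
      simp only at h
      rw [h, ih n (by omega), ih (n + 1) (by omega)]
      linear_combination (-(mu ^ n)) * mu_sq - nu ^ n * nu_sq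

/-! ### The Laplacian of the network -/

theorem sum_path_indicator (N i : ℕ) (hi : i < N) :
    ∑ j : Fin N, (if i + 1 = j.val ∨ j.val + 1 = i then (1 : ℝ) else 0)
      = (if i + 1 < N then 1 else 0) + (if 0 < i then 1 else 0) := by
  have h : ∀ j, (if i + 1 = j ∨ j + 1 = i then (1 : ℝ) else 0)
      = (if j = i + 1 then 1 else 0) + (if j = i - 1 then if 0 < i then 1 else 0 else 0) := by
    intro j; grind
  rw [Fin.sum_univ_eq_sum_range (fun j => if i + 1 = j ∨ j + 1 = i then (1 : ℝ) else 0)]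
  simp only [h, Finset.sum_add_distrib, Finset.sum_ite_eq', Finset.mem_range]
  rw [if_pos (show i - 1 < N by omega)]

theorem sum_cross_indicator (N i : ℕ) (hi : i < N) (hN : 2 ≤ N) (P : Prop) [Decidable P] :
    ∑ j : Fin N, (if (i = j.val ∧ P) ∨ (i = 0 ∧ j.val = N - 1) ∨ (i = N - 1 ∧ j.val = 0)
        then (1 : ℝ) else 0)
      = (if P then 1 else 0) + (if i = 0 then 1 else 0) + (if i = N - 1 then 1 else 0) := by
  have h : ∀ j, (if (i = j ∧ P) ∨ (i = 0 ∧ j = N - 1) ∨ (i = N - 1 ∧ j = 0)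
        then (1 : ℝ) else 0)
      = (if j = i then if P then 1 else 0 else 0) + (if j = N - 1 then if i = 0 then 1 else 0 else 0)
        + (if j = 0 then if i = N - 1 then 1 else 0 else 0) := by
    intro j; grind
  rw [Fin.sum_univ_eq_sum_range (fun j =>
    if (i = j ∧ P) ∨ (i = 0 ∧ j = N - 1) ∨ (i = N - 1 ∧ j = 0) then (1 : ℝ) else 0)]
  simp only [h, Finset.sum_add_distrib, Finset.sum_ite_eq', Finset.mem_range]
  rw [if_pos hi, if_pos (show N - 1 < N by omega), if_pos (show 0 < N by omega)]

section Mobius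

variable {n : ℕ} (i j : Fin (4 * n))

theorem mobius_adj_inl_inl : (mobius n).Adj (Sum.inl i) (Sum.inl j) ↔
    i.val + 1 = j.val ∨ j.val + 1 = i.val := by
  simp only [mobius, SimpleGraph.fromRel_adj, mobiusRel, ne_eq, Sum.inl.injEq, Fin.ext_iff]
  omega

theorem mobius_adj_inr_inr : (mobius n).Adj (Sum.inr i) (Sum.inr j) ↔
    i.val + 1 = j.val ∨ j.val + 1 = i.val := by
  simp only [mobius, SimpleGraph.fromRel_adj, mobiusRel, ne_eq, Sum.inr.injEq, Fin.ext_iff]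
  omega

theorem mobius_adj_inl_inr : (mobius n).Adj (Sum.inl i) (Sum.inr j) ↔
    (i.val = j.val ∧ ((i.val + 1) % 4 = 0 ∨ (i.val + 1) % 4 = 1)) ∨
      (i.val = 0 ∧ j.val = 4 * n - 1) ∨ (i.val = 4 * n - 1 ∧ j.val = 0) := by
  simp [mobius, SimpleGraph.fromRel_adj, mobiusRel, Fin.ext_iff]

theorem mobius_adj_inr_inl : (mobius n).Adj (Sum.inr i) (Sum.inl j) ↔
    (i.val = j.val ∧ ((i.val + 1) % 4 = 0 ∨ (i.val + 1) % 4 = 1)) ∨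
      (i.val = 0 ∧ j.val = 4 * n - 1) ∨ (i.val = 4 * n - 1 ∧ j.val = 0) := by
  rw [SimpleGraph.adj_comm, mobius_adj_inl_inr]
  omega

theorem degree_eq_sum (a : Fin (4 * n) ⊕ Fin (4 * n)) :
    ((mobius n).degree a : ℝ) = ∑ b, if (mobius n).Adj a b then (1 : ℝ) else 0 := by
  rw [← SimpleGraph.card_neighborFinset_eq_degree, SimpleGraph.neighborFinset_eq_filter,
    Finset.card_filter]
  push_cast
  rfl

theorem mobius_degree_inl : ((mobius n).degree (Sum.inl i) : ℝ) = 2 + rung i.val := by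
  rw [degree_eq_sum, Fintype.sum_sum_type]
  simp only [mobius_adj_inl_inl, mobius_adj_inl_inr]
  rw [sum_path_indicator _ _ i.isLt, sum_cross_indicator _ _ i.isLt (by have := i.isLt; omega)]
  unfold rung
  grind

theorem mobius_degree_inr : ((mobius n).degree (Sum.inr i) : ℝ) = 2 + rung i.val := by
  rw [degree_eq_sum, Fintype.sum_sum_type]
  simp only [mobius_adj_inr_inl, mobius_adj_inr_inr]
  rw [sum_path_indicator _ _ i.isLt, sum_cross_indicator _ _ i.isLt (by have := i.isLt; omega)]
  unfold rung
  grind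

end Mobius

/-- The diagonal blocks of the Laplacian of `mobius n`. -/
def pathBlock (n : ℕ) : Matrix (Fin (4 * n)) (Fin (4 * n)) ℝ := fun i j =>
  if i.val = j.val then 2 + rung i.val
  else if i.val + 1 = j.val ∨ j.val + 1 = i.val then -1 else 0

/-- The off-diagonal blocks of the Laplacian of `mobius n`: the rungs and the two twisted edges. -/
def crossBlock (n : ℕ) : Matrix (Fin (4 * n)) (Fin (4 * n)) ℝ := fun i j =>
  if i.val = j.val then -rung i.val
  else if i.val = 0 ∧ j.val = 4 * n - 1 ∨ i.val = 4 * n - 1 ∧ j.val = 0 then -1 else 0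

theorem lapMatrix_mobius (n : ℕ) : (mobius n).lapMatrix ℝ
    = Matrix.fromBlocks (pathBlock n) (crossBlock n) (crossBlock n) (pathBlock n) := by
  ext a b
  simp only [SimpleGraph.lapMatrix, SimpleGraph.degMatrix, Matrix.sub_apply,
    SimpleGraph.adjMatrix_apply, Matrix.diagonal_apply]
  rcases a with i | i <;> rcases b with j | j
  · simp only [mobius_adj_inl_inl, mobius_degree_inl, Matrix.fromBlocks_apply₁₁, pathBlock,
      Sum.inl.injEq, Fin.ext_iff]
    grind
  · simp only [mobius_adj_inl_inr, Matrix.fromBlocks_apply₁₂, crossBlock, rung, reduceCtorEq,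
      if_false]
    grind
  · simp only [mobius_adj_inr_inl, Matrix.fromBlocks_apply₂₁, crossBlock, rung, reduceCtorEq,
      if_false]
    grind
  · simp only [mobius_adj_inr_inr, mobius_degree_inr, Matrix.fromBlocks_apply₂₂, pathBlock,
      Sum.inr.injEq, Fin.ext_iff]
    grind

theorem pathBlock_add (n : ℕ) :
    pathBlock n + crossBlock n = periodicJacobi (4 * n) (fun _ => 2) 1 := by
  ext i j
  simp only [Matrix.add_apply, pathBlock, crossBlock, periodicJacobi]
  grind

theorem pathBlock_sub (n : ℕ) :
    pathBlock n - crossBlock n = periodicJacobi (4 * n) (fun i => 2 + 2 * rung i) (-1) := by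
  ext i j
  simp only [Matrix.sub_apply, pathBlock, crossBlock, periodicJacobi]
  grind

/-! ### The characteristic polynomial -/

open Polynomial in
theorem charpoly_add (n : ℕ) (hn : 1 ≤ n) :
    (pathBlock n + crossBlock n).charpoly
      = transferTrace (fun _ => (2 - X : ℝ[X])) (4 * n) - 2 := by
  have h : (pathBlock n + crossBlock n).charmatrix
      = -periodicJacobi (4 * n) (fun _ => (2 - X : ℝ[X])) 1 := by
    rw [pathBlock_add]
    ext i j : 1
    rw [Matrix.charmatrix_apply, Matrix.diagonal_apply, Matrix.neg_apply]
    simp only [periodicJacobi, Fin.ext_iff]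
    split_ifs <;> simp [← map_ofNat C 2]
  rw [Matrix.charpoly, h, Matrix.det_neg, Fintype.card_fin, pow_mul,
    det_periodicJacobi _ (by omega) _ _ (by ring)]
  norm_num

open Polynomial in
/-- The cycle factor has zero constant term, so only its linear coefficient and the constant term of
the antiperiodic factor contribute. -/
theorem coeff_one_charpoly_lapMatrix (n : ℕ) (hn : 1 ≤ n) :
    ((mobius n).lapMatrix ℝ).charpoly.coeff 1
      = -(4 * n : ℝ) ^ 2 * (mu ^ n + nu ^ n + 2) := by
  obtain ⟨c0, c1⟩ := coeff_transferTrace_two_sub_X (4 * n)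
  have hdet : (pathBlock n - crossBlock n).charpoly.coeff 0 = mu ^ n + nu ^ n + 2 := by
    have h := Matrix.det_eq_sign_charpoly_coeff (pathBlock n - crossBlock n)
    rw [Fintype.card_fin, pow_mul, pathBlock_sub, det_periodicJacobi _ (by omega) _ _ (by ring),
      transferTrace_rung] at h
    norm_num at h
    rw [pathBlock_sub]
    linarith
  rw [lapMatrix_mobius, charpoly_swap, charpoly_add n hn, mul_comm, coeff_mul,
    Finset.Nat.antidiagonal_succ]
  simp [c0, c1, hdet, coeff_ofNat_zero, coeff_ofNat_succ]
  ring

theorem stmt_14 (n : ℕ) (hn : 1 ≤ n) (μs : Fin (8 * n) → ℝ)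
    (hmono : Monotone μs)
    (hzero : μs ⟨0, by omega⟩ = 0)
    (hpos : ∀ i : Fin (8 * n), i ≠ ⟨0, by omega⟩ → 0 < μs i)
    (hchar : ((mobius n).lapMatrix ℝ).charpoly
      = ∏ i : Fin (8 * n), (Polynomial.X - Polynomial.C (μs i))) :
    (1 / (8 * n : ℝ)) * ∏ i ∈ Finset.univ.erase (⟨0, by omega⟩ : Fin (8 * n)), μs i
      = 2 * n * (mu ^ n + nu ^ n + 2) := by
  -- Compare linear coefficients: the factor of the zero eigenvalue is `X`.
  have h := coeff_one_charpoly_lapMatrix n hn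
  rw [hchar, ← Finset.mul_prod_erase _ _ (Finset.mem_univ (⟨0, by omega⟩ : Fin (8 * n))), hzero,
    map_zero, sub_zero, Polynomial.coeff_X_mul, Polynomial.coeff_zero_prod] at h
  simp only [Polynomial.coeff_sub, Polynomial.coeff_X_zero, Polynomial.coeff_C_zero, zero_sub] at h
  -- An odd number `8 n - 1` of factors `-μ`.
  have hodd : Odd (8 * n - 1) := ⟨4 * n - 1, by omega⟩
  rw [Finset.prod_neg, Finset.card_erase_of_mem (Finset.mem_univ _), Finset.card_univ,
    Fintype.card_fin, hodd.neg_one_pow] at h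
  have hn' : (n : ℝ) ≠ 0 := by positivity
  field_simp
  linear_combination -h
end
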